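/- arXiv:2307.02197 — 2 statements merged into one kernel-verified Lean document; each statement's English description precedes it below -/
import Mathlib

section
/- For every real number t with 0 ≤ t ≤ 1, the complex number h(t) = 1 − 2·t·exp(πi(1−t)) is nonzero. -/
/-!
If `1 = c t exp (πi(1 - t))` with `c` and `t` real, then the phase `π(1 - t)` is an integer multiple
of `π`, so `t` is an integer, while taking norms gives `|c| |t| = 1`. A nonzero integer has absolute
value at least `1`, so this is impossible as soon as `1 < |c|`.
-/

theorem im_ofReal_mul_exp_ofReal_mul_I_eq_zero_iff {r θ : ℝ} :
    ((r : ℂ) * Complex.exp (θ * Complex.I)).im = 0 ↔ r = 0 ∨ ∃ n : ℤ, n * Real.pi = θ := by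
  rw [Complex.im_ofReal_mul, Complex.exp_ofReal_mul_I_im, mul_eq_zero, Real.sin_eq_zero_iff]

theorem h_ne_zero_on_unit_interval_general {c : ℝ} (hc : 1 < |c|) (t : ℝ) :
    (1 : ℂ) - (c : ℂ) * (t : ℂ) * Complex.exp (Real.pi * Complex.I * (1 - (t : ℂ))) ≠ 0 := by
  intro h
  have polar : ((c * t : ℝ) : ℂ) * Complex.exp ((Real.pi * (1 - t) : ℝ) * Complex.I) = 1 := by
    push_cast
    rw [mul_right_comm (Real.pi : ℂ)]
    exact (sub_eq_zero.mp h).symm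
  have norm_eq : |c * t| = 1 := by
    rw [← norm_circleMap_zero _ (Real.pi * (1 - t)), circleMap_zero, polar, norm_one]
  have ct_ne_zero : c * t ≠ 0 := abs_pos.mp (norm_eq ▸ one_pos)
  obtain ⟨n, hn⟩ : ∃ n : ℤ, n * Real.pi = Real.pi * (1 - t) :=
    (im_ofReal_mul_exp_ofReal_mul_I_eq_zero_iff.mp
      (by rw [polar, Complex.one_im])).resolve_left ct_ne_zero
  obtain ⟨m, rfl⟩ : ∃ m : ℤ, (m : ℝ) = t := by
    have n_eq : (n : ℝ) = 1 - t := mul_right_cancel₀ Real.pi_ne_zero (hn.trans (mul_comm _ _))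
    exact ⟨1 - n, by push_cast; linarith⟩
  have one_le_abs : 1 ≤ |(m : ℝ)| := by
    exact_mod_cast Int.one_le_abs (Int.cast_ne_zero.mp (right_ne_zero_of_mul ct_ne_zero))
  have one_lt_abs_mul : 1 < |c * m| := by
    rw [abs_mul]
    exact one_lt_mul_of_lt_of_le hc one_le_abs
  exact one_lt_abs_mul.ne' norm_eq

/-- For every real number `t` with `0 ≤ t ≤ 1`, the complex number
`h(t) = 1 − 2·t·exp(πi(1−t))` is nonzero. -/
theorem h_ne_zero_on_unit_interval (t : ℝ) (h0 : 0 ≤ t) (h1 : t ≤ 1) :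
    (1 : ℂ) - 2 * (t : ℂ) * Complex.exp (Real.pi * Complex.I * (1 - (t : ℂ))) ≠ 0 := by
  exact_mod_cast h_ne_zero_on_unit_interval_general (c := 2) (by norm_num) t
end

section
/- Let R be a commutative ring and let x, y ∈ R be such that x is not a zero divisor in R and the image of y is not a zero divisor in R/(x) (i.e., x, y is a regular sequence). Consider the R-linear map f : R³ → R given by f(a,b,c) = a·x² + b·(x·y) + c·y². Then the kernel of f is the R-submodule of R³ generated by the two elements (y, −x, 0) and (0, y, −x). -/
/-!
If `∑ i ≤ n, x ^ (n - i) * y ^ i * vᵢ = 0`, then `y ^ n * vₙ` is a multiple of `x`, hence so is `vₙ`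
because `y ^ n` is regular modulo `x`. Subtracting a multiple of the last Koszul relation makes
`vₙ` vanish; the sum is then divisible by `x`, and cancelling `x` leaves a syzygy of degree `n - 1`.
-/

section

variable {R M : Type*} [CommRing R] [AddCommGroup M] [Module R M]

/-- Evaluation at `(x, y)` of a binary form of degree `n` with coefficients in a module: the
generators `x ^ n, x ^ (n - 1) * y, …, y ^ n` of the ideal power `(x, y) ^ n`, as a map out of
`M ^ (n + 1)`. The coefficient `v i` goes with `y ^ i`. -/
def binaryFormEval (x y : R) (n : ℕ) : (Fin (n + 1) → M) →ₗ[R] M :=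
  ∑ i : Fin (n + 1), (x ^ (n - i : ℕ) * y ^ (i : ℕ)) • LinearMap.proj i

/-- The relations `y * (x ^ (n - i) * y ^ i) = x * (x ^ (n - i - 1) * y ^ (i + 1))` between
consecutive monomials of degree `n`, as the map `M ^ n → M ^ (n + 1)` whose `i`-th column is
`y • eᵢ - x • eᵢ₊₁`. -/
def koszulRelation (x y : R) (n : ℕ) : (Fin n → M) →ₗ[R] (Fin (n + 1) → M) :=
  ∑ i : Fin n, (y • LinearMap.single R (fun _ ↦ M) i.castSucc -
    x • LinearMap.single R (fun _ ↦ M) i.succ) ∘ₗ LinearMap.proj i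

lemma binaryFormEval_apply (x y : R) (n : ℕ) (v : Fin (n + 1) → M) :
    binaryFormEval x y n v = ∑ i : Fin (n + 1), (x ^ (n - i : ℕ) * y ^ (i : ℕ)) • v i := by
  simp [binaryFormEval]

lemma binaryFormEval_single (x y : R) (n : ℕ) (i : Fin (n + 1)) (m : M) :
    binaryFormEval x y n (Pi.single i m) = (x ^ (n - i : ℕ) * y ^ (i : ℕ)) • m := by
  simp [binaryFormEval_apply, Pi.single_apply]

lemma koszulRelation_apply (x y : R) (n : ℕ) (c : Fin n → M) :
    koszulRelation x y n c =
      ∑ i : Fin n, (Pi.single i.castSucc (y • c i) - Pi.single i.succ (x • c i)) := by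
  simp [koszulRelation, Pi.single_smul']

lemma binaryFormEval_succ (x y : R) (n : ℕ) (v : Fin (n + 2) → M) :
    binaryFormEval x y (n + 1) v =
      x • binaryFormEval x y n (Fin.init v) + y ^ (n + 1) • v (Fin.last (n + 1)) := by
  simp only [binaryFormEval_apply, Fin.sum_univ_castSucc (n := n + 1), Finset.smul_sum]
  congr 1
  · refine Finset.sum_congr rfl fun i _ ↦ ?_
    rw [smul_smul, ← mul_assoc, ← pow_succ', Fin.val_castSucc,
      Nat.sub_add_comm (Nat.lt_succ_iff.mp i.isLt), Fin.init]
  · simp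

lemma binaryFormEval_koszulRelation (x y : R) (n : ℕ) (c : Fin n → M) :
    binaryFormEval x y n (koszulRelation x y n c) = 0 := by
  have monomial_relation (i : Fin n) :
      x ^ (n - i : ℕ) * y ^ (i : ℕ) * y = x ^ (n - (i + 1) : ℕ) * y ^ (i + 1 : ℕ) * x := by
    rw [show n - (i : ℕ) = n - (i + 1) + 1 by omega]
    ring
  simp [koszulRelation_apply, binaryFormEval_single, smul_smul, monomial_relation,
    -Finset.sum_sub_distrib]

lemma init_koszulRelation_snoc (x y : R) (n : ℕ) (c : Fin n → M) (m : M) :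
    Fin.init (koszulRelation x y (n + 1) (Fin.snoc c m)) =
      koszulRelation x y n c + Pi.single (Fin.last n) (y • m) := by
  ext j
  rw [Fin.init, koszulRelation_apply, Fin.sum_univ_castSucc, koszulRelation_apply]
  simp [Fin.succ_castSucc, -Fin.castSucc_succ, Pi.single_apply]

lemma koszulRelation_snoc_last (x y : R) (n : ℕ) (c : Fin n → M) (m : M) :
    koszulRelation x y (n + 1) (Fin.snoc c m) (Fin.last (n + 1)) = -(x • m) := by
  rw [koszulRelation_apply, Fin.sum_univ_castSucc]
  simp [Fin.succ_castSucc, -Fin.castSucc_succ]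

open scoped Pointwise in
lemma exists_eq_smul_of_smul_add_smul_eq_zero {x y : R} (hx : IsSMulRegular M x)
    (hy : IsSMulRegular (QuotSMulTop x M) y) {a b : M} (h : x • a + y • b = 0) :
    ∃ c : M, a = y • c ∧ b = -(x • c) := by
  have hb : b ∈ x • (⊤ : Submodule R M) := by
    refine mem_of_isSMulRegular_quotient_of_smul_mem hy ?_
    rw [eq_neg_of_add_eq_zero_right h]
    exact neg_mem (Submodule.smul_mem_pointwise_smul a x ⊤ trivial)
  obtain ⟨c, -, rfl⟩ := hb
  refine ⟨-c, hx ?_, by simp⟩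
  simpa [smul_comm x y] using eq_neg_of_add_eq_zero_left h

lemma binaryFormEval_two (x y a b c : R) :
    binaryFormEval x y 2 ![a, b, c] = a * x ^ 2 + b * (x * y) + c * y ^ 2 := by
  simp [binaryFormEval_apply, Fin.sum_univ_three, mul_comm]

lemma mem_range_koszulRelation_two (x y a b c : R) :
    ![a, b, c] ∈ Set.range (koszulRelation (M := R) x y 2) ↔
      (a, b, c) ∈ Submodule.span R {((y, -x, 0) : R × R × R), ((0, y, -x) : R × R × R)} := by
  simp [Submodule.mem_span_pair, Fin.exists_fin_succ_pi, koszulRelation_apply,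
    Fin.sum_univ_two, funext_iff, Fin.forall_fin_succ, mul_comm, neg_add_eq_sub]

open scoped Pointwise in
lemma isSMulRegular_quotSMulTop_self_iff (x y : R) :
    IsSMulRegular (QuotSMulTop x R) y ↔
      ∀ a : R, a * y ∈ Ideal.span {x} → a ∈ Ideal.span {x} := by
  have mem_smul_top (a : R) : a ∈ x • (⊤ : Submodule R R) ↔ a ∈ Ideal.span {x} := by
    simp [Submodule.mem_smul_pointwise_iff_exists, Ideal.mem_span_singleton', mul_comm]
  simp only [QuotSMulTop, isSMulRegular_quotient_iff_mem_of_smul_mem, mem_smul_top, smul_eq_mul,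
    mul_comm y]

theorem syzygies_of_square_of_regular_sequence_general {x y : R} (hx : IsSMulRegular M x)
    (hy : IsSMulRegular (QuotSMulTop x M) y) (n : ℕ) :
    Function.Exact (koszulRelation (M := M) x y n) (binaryFormEval x y n) := by
  refine fun v ↦ ⟨fun hv ↦ ?_, ?_⟩
  · induction n with
    | zero =>
      refine ⟨0, ?_⟩
      have hv₀ : v 0 = 0 := by simpa [binaryFormEval_apply] using hv
      ext i
      simp [koszulRelation_apply, Fin.fin_one_eq_zero i, hv₀]
    | succ n ih =>
      rw [binaryFormEval_succ] at hv
      obtain ⟨m, hinit, hlast⟩ := exists_eq_smul_of_smul_add_smul_eq_zero hx (hy.pow (n + 1)) hv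
      have hreduced :
          binaryFormEval x y n (Fin.init v - Pi.single (Fin.last n) (y • m)) = 0 := by
        rw [map_sub, hinit, binaryFormEval_single]
        simp [smul_smul, ← pow_succ]
      obtain ⟨c, hc⟩ := ih _ hreduced
      refine ⟨Fin.snoc c m, ?_⟩
      rw [← Fin.snoc_init_self v, ← Fin.snoc_init_self (koszulRelation x y (n + 1) _),
        init_koszulRelation_snoc, koszulRelation_snoc_last, hc, hlast, sub_add_cancel]
  · rintro ⟨c, rfl⟩
    exact binaryFormEval_koszulRelation x y n c

end

/-- For a regular sequence `x, y` in a commutative ring `R`, the kernel of the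
map `R³ → R`, `(a,b,c) ↦ a·x² + b·xy + c·y²`, is generated by `(y, −x, 0)` and
`(0, y, −x)`. -/
theorem syzygies_of_square_of_regular_sequence (R : Type*) [CommRing R] (x y : R)
    (hx : ∀ a : R, a * x = 0 → a = 0)
    (hy : ∀ a : R, a * y ∈ Ideal.span {x} → a ∈ Ideal.span {x}) :
    ∀ v : R × R × R,
      v.1 * x ^ 2 + v.2.1 * (x * y) + v.2.2 * y ^ 2 = 0 ↔
        v ∈ Submodule.span R {((y, -x, 0) : R × R × R), ((0, y, -x) : R × R × R)} := by
  have hx' : IsSMulRegular R x := .of_right_eq_zero_of_smul fun a ha ↦ hx a (mul_comm a x ▸ ha)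
  have hy' : IsSMulRegular (QuotSMulTop x R) y := (isSMulRegular_quotSMulTop_self_iff x y).mpr hy
  rintro ⟨a, b, c⟩
  rw [← mem_range_koszulRelation_two, ← binaryFormEval_two]
  exact syzygies_of_square_of_regular_sequence_general hx' hy' 2 ![a, b, c]
end
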